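/- For every constant γ > 0 there is a constant C > 0 (depending only on γ) such that for all integers m, d ≥ 2 with m ≥ γ·d, a jittered sampling point set P of N = m^d points in [0,1)^d satisfies E[D*(P)] ≥ C · d · m^((d−1)/2). -/

import Mathlib

open MeasureTheory ProbabilityTheory Real

noncomputable section

/-- The axis-aligned cube `∏_i [x_i/m, x_i/m + 1/m)` of the `m`-grid partition of `[0,1)^d`. -/
def jitterCube (m d : ℕ) (x : Fin d → Fin m) : Set (Fin d → ℝ) :=
  Set.univ.pi fun i => Set.Ico ((x i : ℝ) / m) ((x i : ℝ) / m + 1 / m)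

/-- The distribution of a jittered sampling point configuration: independently, one point
uniformly distributed in each of the `m^d` cubes. -/
def jitterMeasure (m d : ℕ) : Measure ((Fin d → Fin m) → (Fin d → ℝ)) :=
  Measure.pi fun x => ((m : ENNReal) ^ d) • volume.restrict (jitterCube m d x)

open scoped Classical in
/-- Signed (non-normalized) discrepancy `|P ∩ A| - N·λ(A)` with `N = m^d` of a point
configuration `P`. -/
def jdisc (m d : ℕ) (P : (Fin d → Fin m) → (Fin d → ℝ)) (A : Set (Fin d → ℝ)) : ℝ :=
  ((Finset.univ.filter fun x => P x ∈ A).card : ℝ) - (m : ℝ) ^ d * (volume A).toReal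

/-- The anchored box `[0,y) = ∏_i [0, y_i)`. -/
def anchoredBox (d : ℕ) (y : Fin d → ℝ) : Set (Fin d → ℝ) :=
  Set.univ.pi fun i => Set.Ico 0 (y i)

/-- The (non-normalized) star discrepancy `D*(P) = sup_{y ∈ [0,1)^d} |disc([0,y))|`. -/
def starDisc (m d : ℕ) (P : (Fin d → Fin m) → (Fin d → ℝ)) : ℝ :=
  ⨆ y : {y : Fin d → ℝ // ∀ i, y i ∈ Set.Ico (0 : ℝ) 1}, |jdisc m d P (anchoredBox d y.1)|

/-- The expected star discrepancy of a jittered sampling point set of `m^d` points. -/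
def expStarDisc (m d : ℕ) : ℝ :=
  ∫ P, starDisc m d P ∂(jitterMeasure m d)

/-!
The box is chosen adaptively: starting from `[0, 1 - 1/m)^d`, it is extended into the lower half of
the last grid layer in exactly those directions in which this extension has positive discrepancy.
A cube that lies in the last layer in direction `i` only is then cut in half or missed, according to
direction `i` alone, so that the `(m-1)^(d-1)` cubes of this kind contribute the positive part of a
sum of as many independent variables `±1/2`, which by a fourth moment estimate has expectation at
least of the order of `√((m-1)^(d-1))`. The point of any other cube has no influence on the choice
of the box, so its contribution has mean zero. Summing over the `d` directions gives a lower bound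
of order `d √((m-1)^(d-1))`, and `(1 - 1/m)^(d-1)` is bounded below as long as `m ≥ γ d`.
-/

lemma integrable_pow_of_memLp {Ω : Type*} [MeasurableSpace Ω] {μ : Measure Ω} [IsFiniteMeasure μ]
    {X : Ω → ℝ} {p k : ℕ} (hX : MemLp X p μ) (hk : k ≤ p) : Integrable (fun ω => X ω ^ k) μ := by
  have hXk : MemLp X k μ := hX.mono_exponent (mod_cast hk)
  have hmeas : AEStronglyMeasurable (fun ω => X ω ^ k) μ := hX.aestronglyMeasurable.pow k
  rw [← integrable_norm_iff hmeas]
  simpa only [norm_pow] using hXk.integrable_norm_pow'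

section Kurtosis

variable {Ω : Type*} [MeasurableSpace Ω] {μ : Measure Ω} {X Y : Ω → ℝ}

/-- A centred real random variable of kurtosis at most `3`, that is `E[X⁴] ≤ 3 Var[X]²`. This class
is closed under independent sums, and a variable in it has `E[X⁺]` of the order of its standard
deviation. -/
structure IsPlatykurtic (X : Ω → ℝ) (μ : Measure Ω) : Prop where
  memLp : MemLp X (4 : ℕ) μ
  integral_eq_zero : ∫ ω, X ω ∂μ = 0
  integral_pow_four_le : ∫ ω, X ω ^ 4 ∂μ ≤ 3 * Var[X; μ] ^ 2

lemma IsPlatykurtic.variance_eq (hX : IsPlatykurtic X μ) : Var[X; μ] = ∫ ω, X ω ^ 2 ∂μ :=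
  variance_of_integral_eq_zero hX.memLp.aestronglyMeasurable.aemeasurable hX.integral_eq_zero

lemma variance_eq_of_sq_ae_eq_const [IsProbabilityMeasure μ] {c : ℝ} (hX : AEMeasurable X μ)
    (hmean : ∫ ω, X ω ∂μ = 0) (hsq : ∀ᵐ ω ∂μ, X ω ^ 2 = c) : Var[X; μ] = c := by
  rw [variance_of_integral_eq_zero hX hmean, integral_congr_ae hsq, integral_const, probReal_univ,
    one_smul]

lemma isPlatykurtic_of_sq_ae_eq_const [IsProbabilityMeasure μ] {c : ℝ} (hX : AEMeasurable X μ)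
    (hmean : ∫ ω, X ω ∂μ = 0) (hsq : ∀ᵐ ω ∂μ, X ω ^ 2 = c) : IsPlatykurtic X μ where
  memLp := MemLp.of_bound hX.aestronglyMeasurable √c <| hsq.mono fun ω hω => by
    rw [← hω, Real.sqrt_sq_eq_abs, Real.norm_eq_abs]
  integral_eq_zero := hmean
  integral_pow_four_le := by
    have hpow : ∀ᵐ ω ∂μ, X ω ^ 4 = c ^ 2 := hsq.mono fun ω hω => by rw [← hω]; ring
    rw [variance_eq_of_sq_ae_eq_const hX hmean hsq, integral_congr_ae hpow, integral_const,
      probReal_univ, one_smul]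
    linarith [sq_nonneg c]

lemma integral_pow_mul_pow_of_indepFun (hXY : IndepFun X Y μ) (hX : AEMeasurable X μ)
    (hY : AEMeasurable Y μ) (j k : ℕ) :
    ∫ ω, X ω ^ j * Y ω ^ k ∂μ = (∫ ω, X ω ^ j ∂μ) * ∫ ω, Y ω ^ k ∂μ := by
  have hpow := hXY.comp (measurable_id.pow_const j) (measurable_id.pow_const k)
  exact hpow.integral_fun_mul_eq_mul_integral (hX.pow_const j).aestronglyMeasurable
    (hY.pow_const k).aestronglyMeasurable

lemma integral_add_pow_four_of_indepFun [IsProbabilityMeasure μ] (hXY : IndepFun X Y μ)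
    (hX : MemLp X (4 : ℕ) μ) (hY : MemLp Y (4 : ℕ) μ)
    (hX0 : ∫ ω, X ω ∂μ = 0) (hY0 : ∫ ω, Y ω ∂μ = 0) :
    ∫ ω, (X ω + Y ω) ^ 4 ∂μ =
      ∫ ω, X ω ^ 4 ∂μ + 6 * ((∫ ω, X ω ^ 2 ∂μ) * ∫ ω, Y ω ^ 2 ∂μ) + ∫ ω, Y ω ^ 4 ∂μ := by
  have integrable_term : ∀ k ∈ Finset.range 5,
      Integrable (fun ω => X ω ^ k * Y ω ^ (4 - k) * (Nat.choose 4 k : ℝ)) μ := fun k hk =>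
    ((hXY.comp (measurable_id.pow_const k) (measurable_id.pow_const (4 - k))).integrable_mul
      (integrable_pow_of_memLp hX (Finset.mem_range_succ_iff.1 hk))
      (integrable_pow_of_memLp hY (Nat.sub_le 4 k))).mul_const _
  simp only [add_pow]
  rw [integral_finsetSum _ integrable_term]
  simp only [integral_mul_const, integral_pow_mul_pow_of_indepFun hXY
    hX.aestronglyMeasurable.aemeasurable hY.aestronglyMeasurable.aemeasurable]
  simp only [Finset.sum_range_succ, Finset.range_one, Finset.sum_singleton, pow_zero,
    integral_const, probReal_univ, smul_eq_mul, mul_one, tsub_zero, one_mul, Nat.choose,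
    Nat.cast_one, pow_one, hX0, Nat.add_one_sub_one, zero_mul, add_zero, Nat.reduceAdd,
    Nat.cast_ofNat, Nat.reduceSub, hY0, mul_zero, tsub_self]
  ring

lemma IsPlatykurtic.add [IsProbabilityMeasure μ] (hX : IsPlatykurtic X μ) (hY : IsPlatykurtic Y μ)
    (hXY : IndepFun X Y μ) : IsPlatykurtic (X + Y) μ where
  memLp := hX.memLp.add hY.memLp
  integral_eq_zero := by
    rw [integral_add' (hX.memLp.integrable (by norm_num)) (hY.memLp.integrable (by norm_num)),
      hX.integral_eq_zero, hY.integral_eq_zero, add_zero]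
  integral_pow_four_le := by
    have hvar : Var[X + Y; μ] = Var[X; μ] + Var[Y; μ] :=
      hXY.variance_add (hX.memLp.mono_exponent (by norm_num)) (hY.memLp.mono_exponent (by norm_num))
    simp only [Pi.add_apply]
    rw [integral_add_pow_four_of_indepFun hXY hX.memLp hY.memLp hX.integral_eq_zero
      hY.integral_eq_zero, ← hX.variance_eq, ← hY.variance_eq, hvar]
    linarith [hX.integral_pow_four_le, hY.integral_pow_four_le]

lemma isPlatykurtic_finsetSum [IsProbabilityMeasure μ] {ι : Type*} {X : ι → Ω → ℝ} {s : Finset ι}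
    (hmeas : ∀ i, Measurable (X i)) (hindep : iIndepFun X μ)
    (hX : ∀ i ∈ s, IsPlatykurtic (X i) μ) : IsPlatykurtic (∑ i ∈ s, X i) μ := by
  classical
  induction s using Finset.induction_on with
  | empty =>
    exact isPlatykurtic_of_sq_ae_eq_const (c := 0) aemeasurable_const (by simp)
      (.of_forall fun ω => by simp)
  | insert i s hi ih =>
    rw [Finset.sum_insert hi, add_comm]
    exact (ih fun j hj => hX j (Finset.mem_insert_of_mem hj)).add
      (hX i (Finset.mem_insert_self i s)) (hindep.indepFun_finsetSum_of_notMem hmeas hi)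

lemma sq_sub_pow_four_le_abs (u : ℝ) : u ^ 2 - u ^ 4 ≤ |u| := by
  rw [← sq_abs, ← (by decide : Even 4).pow_abs]
  rcases le_total |u| 1 with hu | hu
  · linarith [pow_le_of_le_one (abs_nonneg u) hu two_ne_zero, pow_nonneg (abs_nonneg u) 4]
  · linarith [pow_le_pow_right₀ hu (by norm_num : 2 ≤ 4), abs_nonneg u]

lemma integral_sq_sub_integral_pow_four_le_integral_abs [IsFiniteMeasure μ]
    (hX : MemLp X (4 : ℕ) μ) :
    ∫ ω, X ω ^ 2 ∂μ - ∫ ω, X ω ^ 4 ∂μ ≤ ∫ ω, |X ω| ∂μ := by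
  have hsq : Integrable (fun ω => X ω ^ 2) μ := integrable_pow_of_memLp hX (by norm_num)
  have hfourth : Integrable (fun ω => X ω ^ 4) μ := integrable_pow_of_memLp hX le_rfl
  rw [← integral_sub hsq hfourth]
  exact integral_mono (hsq.sub hfourth) (hX.integrable (by norm_num)).abs
    fun ω => sq_sub_pow_four_le_abs (X ω)

lemma IsPlatykurtic.sqrt_variance_le_integral_abs [IsFiniteMeasure μ] (hX : IsPlatykurtic X μ) :
    2 / 9 * √Var[X; μ] ≤ ∫ ω, |X ω| ∂μ := by
  set σ := √Var[X; μ]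
  have hσ2 : σ ^ 2 = Var[X; μ] := Real.sq_sqrt (variance_nonneg X μ)
  rcases (Real.sqrt_nonneg Var[X; μ]).eq_or_lt' with hσ | (hσ : 0 < σ)
  · rw [show σ = 0 from hσ, mul_zero]
    exact integral_nonneg fun ω => abs_nonneg _
  -- The scale `3σ` maximizes the resulting constant.
  have hsecond : ∫ ω, (X ω / (3 * σ)) ^ 2 ∂μ = 1 / 9 := by
    simp only [div_pow]
    rw [integral_div, ← hX.variance_eq, ← hσ2]
    field_simp
    norm_num
  have hfourth : ∫ ω, (X ω / (3 * σ)) ^ 4 ∂μ ≤ 1 / 27 := by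
    simp only [div_pow]
    rw [integral_div, div_le_iff₀ (by positivity)]
    calc ∫ ω, X ω ^ 4 ∂μ ≤ 3 * (σ ^ 2) ^ 2 := hσ2 ▸ hX.integral_pow_four_le
      _ = 1 / 27 * (3 * σ) ^ 4 := by ring
  have habs : ∫ ω, |X ω / (3 * σ)| ∂μ = (∫ ω, |X ω| ∂μ) / (3 * σ) := by
    rw [← integral_div]
    simp only [abs_div, abs_of_pos (by positivity : 0 < 3 * σ)]
  have hscaled : MemLp (fun ω => X ω / (3 * σ)) (4 : ℕ) μ := by
    simpa only [div_eq_mul_inv] using hX.memLp.mul_const (3 * σ)⁻¹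
  have hlower : 2 / 27 ≤ (∫ ω, |X ω| ∂μ) / (3 * σ) := by
    linarith [integral_sq_sub_integral_pow_four_le_integral_abs hscaled]
  rw [le_div_iff₀ (by positivity)] at hlower
  linarith

lemma integral_max_zero_of_integral_eq_zero (hX : Integrable X μ) (hmean : ∫ ω, X ω ∂μ = 0) :
    ∫ ω, max (X ω) 0 ∂μ = (∫ ω, |X ω| ∂μ) / 2 := by
  have hmax (u : ℝ) : max u 0 = (u + |u|) / 2 := by
    rcases le_total 0 u with hu | hu
    · rw [max_eq_left hu, abs_of_nonneg hu]; ring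
    · rw [max_eq_right hu, abs_of_nonpos hu]; ring
  simp only [hmax]
  rw [integral_div, integral_add hX hX.abs, hmean, zero_add]

lemma IsPlatykurtic.sqrt_variance_div_le_integral_max_zero [IsFiniteMeasure μ]
    (hX : IsPlatykurtic X μ) : √Var[X; μ] / 9 ≤ ∫ ω, max (X ω) 0 ∂μ := by
  rw [integral_max_zero_of_integral_eq_zero (hX.memLp.integrable (by norm_num))
    hX.integral_eq_zero]
  linarith [hX.sqrt_variance_le_integral_abs]

end Kurtosis

section ProductMeasure

variable {ι : Type*} {Ω : ι → Type*} [∀ i, MeasurableSpace (Ω i)] {β γ : Type*}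
  [MeasurableSpace β] [MeasurableSpace γ]

lemma exists_measurable_eq_comp_restrict_of_dependsOn [∀ i, Nonempty (Ω i)]
    {F : (∀ i, Ω i) → β} {s : Finset ι} (hF : Measurable F) (hFs : DependsOn F (s : Set ι)) :
    ∃ φ : (∀ i : s, Ω i) → β, Measurable φ ∧ F = φ ∘ s.restrict := by
  classical
  let base : ∀ i, Ω i := fun _ => Classical.arbitrary _
  refine ⟨fun z => F (Function.updateFinset base s z), hF.comp measurable_updateFinset, ?_⟩
  ext P
  refine hFs fun i hi => ?_
  simp [Function.updateFinset, Finset.mem_coe.1 hi]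

lemma indepFun_of_dependsOn_of_disjoint [Fintype ι] {μ : ∀ i, Measure (Ω i)}
    [∀ i, IsProbabilityMeasure (μ i)] {F : (∀ i, Ω i) → β} {G : (∀ i, Ω i) → γ}
    {s t : Finset ι} (hst : Disjoint s t) (hF : Measurable F) (hG : Measurable G)
    (hFs : DependsOn F (s : Set ι)) (hGt : DependsOn G (t : Set ι)) :
    IndepFun F G (Measure.pi μ) := by
  have : ∀ i, Nonempty (Ω i) := fun i => nonempty_of_isProbabilityMeasure (μ i)
  obtain ⟨φ, hφ, rfl⟩ := exists_measurable_eq_comp_restrict_of_dependsOn hF hFs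
  obtain ⟨ψ, hψ, rfl⟩ := exists_measurable_eq_comp_restrict_of_dependsOn hG hGt
  have hcoord : iIndepFun (fun i (P : ∀ i, Ω i) => P i) (Measure.pi μ) :=
    iIndepFun_pi (X := fun _ a => a) fun _ => aemeasurable_id
  exact (hcoord.indepFun_finset s t hst measurable_pi_apply).comp hφ hψ

end ProductMeasure

lemma integral_comp_prodMk_of_indepFun {Ω β γ : Type*} [MeasurableSpace Ω] [MeasurableSpace β]
    [MeasurableSpace γ] {μ : Measure Ω} [IsFiniteMeasure μ] {Z : Ω → β} {Y : Ω → γ}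
    {f : β × γ → ℝ} (hZY : IndepFun Z Y μ) (hZ : AEMeasurable Z μ) (hY : AEMeasurable Y μ)
    (hf : Integrable f ((μ.map Z).prod (μ.map Y))) :
    ∫ ω, f (Z ω, Y ω) ∂μ = ∫ z, ∫ y, f (z, y) ∂μ.map Y ∂μ.map Z := by
  have hlaw := (indepFun_iff_map_prod_eq_prod_map_map hZ hY).1 hZY
  rw [← integral_prod f hf, ← hlaw, integral_map (hZ.prodMk hY)]
  rw [hlaw]
  exact hf.aestronglyMeasurable

section Cells

variable {m d : ℕ}

/-- The uniform distribution on the `a`-th of the `m` intervals of length `1/m` that partition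
`[0,1)`. -/
def cellMeasure (m : ℕ) (a : Fin m) : Measure ℝ :=
  (m : ENNReal) • volume.restrict (Set.Ico ((a : ℝ) / m) ((a : ℝ) / m + 1 / m))

/-- The uniform distribution on `jitterCube m d x`, encoded as a product of one-dimensional uniform
distributions so that the law of a single coordinate can be read off. -/
def cubeMeasure (m d : ℕ) (x : Fin d → Fin m) : Measure (Fin d → ℝ) :=
  Measure.pi fun i => cellMeasure m (x i)

lemma measurableSet_jitterCube (x : Fin d → Fin m) : MeasurableSet (jitterCube m d x) :=
  .univ_pi fun _ => measurableSet_Ico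

variable [NeZero m]

instance isProbabilityMeasure_cellMeasure (a : Fin m) : IsProbabilityMeasure (cellMeasure m a) where
  measure_univ := by
    have hm : (m : ENNReal) ≠ 0 := mod_cast NeZero.ne m
    rw [cellMeasure, Measure.smul_apply, Measure.restrict_apply_univ, Real.volume_Ico,
      add_sub_cancel_left, one_div, ENNReal.ofReal_inv_of_pos (mod_cast NeZero.pos m),
      ENNReal.ofReal_natCast, smul_eq_mul, ENNReal.mul_inv_cancel hm (ENNReal.natCast_ne_top m)]

instance isProbabilityMeasure_cubeMeasure (x : Fin d → Fin m) :
    IsProbabilityMeasure (cubeMeasure m d x) := by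
  unfold cubeMeasure; infer_instance

lemma cubeMeasure_eq_smul_restrict (x : Fin d → Fin m) :
    cubeMeasure m d x = ((m : ENNReal) ^ d) • volume.restrict (jitterCube m d x) := by
  refine Measure.pi_eq fun s _ => ?_
  rw [jitterCube, volume_pi, Measure.restrict_pi_pi, Measure.smul_apply, Measure.pi_pi]
  simp only [cellMeasure, Measure.smul_apply, smul_eq_mul, Finset.prod_mul_distrib,
    Finset.prod_const, Finset.card_univ, Fintype.card_fin]

lemma jitterMeasure_eq_pi : jitterMeasure m d = Measure.pi (cubeMeasure m d) := by
  simp only [jitterMeasure, ← cubeMeasure_eq_smul_restrict]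

instance isProbabilityMeasure_jitterMeasure : IsProbabilityMeasure (jitterMeasure m d) := by
  rw [jitterMeasure_eq_pi]; infer_instance

lemma ae_mem_jitterCube (x : Fin d → Fin m) : ∀ᵐ p ∂cubeMeasure m d x, p ∈ jitterCube m d x := by
  rw [cubeMeasure_eq_smul_restrict]
  exact Measure.ae_smul_measure (ae_restrict_mem (measurableSet_jitterCube x)) _

lemma measurePreserving_eval_jitterMeasure (x : Fin d → Fin m) :
    MeasurePreserving (fun P => P x) (jitterMeasure m d) (cubeMeasure m d x) := by
  rw [jitterMeasure_eq_pi]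
  exact measurePreserving_eval _ x

lemma ae_forall_mem_jitterCube :
    ∀ᵐ P ∂jitterMeasure m d, ∀ x, P x ∈ jitterCube m d x :=
  ae_all_iff.2 fun x =>
    (measurePreserving_eval_jitterMeasure x).quasiMeasurePreserving.ae (ae_mem_jitterCube x)

lemma cellMeasure_real_Iio_midpoint (a : Fin m) :
    (cellMeasure m a).real (Set.Iio ((a : ℝ) / m + 1 / (2 * m))) = 1 / 2 := by
  have hm : (0 : ℝ) < m := mod_cast NeZero.pos m
  have hhalf : (1 : ℝ) / (2 * m) ≤ 1 / m := by
    rw [div_le_div_iff₀ (by positivity) hm]; linarith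
  rw [cellMeasure, measureReal_ennreal_smul_apply, measureReal_restrict_apply measurableSet_Iio,
    Set.inter_comm, Set.Ico_inter_Iio, min_eq_right (by linarith),
    Real.volume_real_Ico_of_le (le_add_of_nonneg_right (by positivity)), add_sub_cancel_left,
    ENNReal.toReal_natCast]
  field_simp

lemma cubeMeasure_real_eval_preimage (x : Fin d → Fin m) (i : Fin d) {A : Set ℝ}
    (hA : MeasurableSet A) :
    (cubeMeasure m d x).real {p | p i ∈ A} = (cellMeasure m (x i)).real A :=
  (measurePreserving_eval (fun j => cellMeasure m (x j)) i).measureReal_preimage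
    hA.nullMeasurableSet

lemma mem_jitterCube_iff {x : Fin d → Fin m} {p : Fin d → ℝ} :
    p ∈ jitterCube m d x ↔ ∀ i, ⌊p i * m⌋ = (x i : ℕ) := by
  have hm : (0 : ℝ) < m := mod_cast NeZero.pos m
  simp only [jitterCube, Set.mem_univ_pi, Set.mem_Ico, Int.floor_eq_iff, ← add_div,
    div_le_iff₀ hm, lt_div_iff₀ hm, Int.cast_natCast]

lemma pairwiseDisjoint_jitterCube :
    Pairwise (Function.onFun Disjoint (jitterCube m d)) := by
  intro x y hxy
  refine Set.disjoint_left.2 fun p hx hy => hxy ?_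
  ext i
  exact_mod_cast (mem_jitterCube_iff.1 hx i).symm.trans (mem_jitterCube_iff.1 hy i)

lemma iUnion_jitterCube :
    ⋃ x, jitterCube m d x = Set.univ.pi fun _ => Set.Ico (0 : ℝ) 1 := by
  have hm : (0 : ℝ) < m := mod_cast NeZero.pos m
  ext p
  simp only [Set.mem_iUnion, mem_jitterCube_iff, Set.mem_univ_pi, Set.mem_Ico]
  constructor
  · rintro ⟨x, hx⟩ i
    have hfloor := Int.floor_eq_iff.1 (hx i)
    have hlt : ((x i : ℕ) : ℝ) + 1 ≤ m := mod_cast (x i).isLt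
    simp only [Int.cast_natCast] at hfloor
    constructor
    · exact nonneg_of_mul_nonneg_left ((Nat.cast_nonneg _).trans hfloor.1) hm
    · exact lt_of_mul_lt_mul_right (by linarith) hm.le
  · intro hp
    have hfloor : ∀ i, 0 ≤ ⌊p i * m⌋ := fun i => Int.floor_nonneg.2 (mul_nonneg (hp i).1 hm.le)
    have hlt : ∀ i, ⌊p i * m⌋.toNat < m := fun i => by
      rw [Int.toNat_lt (hfloor i), Int.floor_lt]
      simpa using mul_lt_mul_of_pos_right (hp i).2 hm
    exact ⟨fun i => ⟨_, hlt i⟩, fun i => (Int.toNat_of_nonneg (hfloor i)).symm⟩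

lemma sum_cubeMeasure_real {A : Set (Fin d → ℝ)} (hA : MeasurableSet A)
    (hA1 : A ⊆ Set.univ.pi fun _ => Set.Ico (0 : ℝ) 1) :
    ∑ x, (cubeMeasure m d x).real A = (m : ℝ) ^ d * volume.real A := by
  have hfinite : volume A ≠ ⊤ := by
    refine measure_ne_top_of_subset hA1 ?_
    simp [Real.volume_pi_Ico]
  have hvol : volume.real A = ∑ x, volume.real (A ∩ jitterCube m d x) := by
    rw [← measureReal_iUnion_fintype
        (fun x y hxy => (pairwiseDisjoint_jitterCube hxy).mono Set.inter_subset_right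
          Set.inter_subset_right)
        (fun x => hA.inter (measurableSet_jitterCube x))
        (fun x => measure_ne_top_of_subset Set.inter_subset_left hfinite),
      ← Set.inter_iUnion, iUnion_jitterCube, Set.inter_eq_left.2 hA1]
  simp only [hvol, Finset.mul_sum, cubeMeasure_eq_smul_restrict, measureReal_ennreal_smul_apply,
    measureReal_restrict_apply hA, ENNReal.toReal_pow, ENNReal.toReal_natCast]

end Cells

section CubeDiscrepancy

variable {m d : ℕ}

/-- The contribution of the point of the cube `jitterCube m d x`, when it lies at `p`, to the signed
discrepancy of `A`. -/
def cubeDisc (x : Fin d → Fin m) (A : Set (Fin d → ℝ)) (p : Fin d → ℝ) : ℝ :=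
  A.indicator 1 p - (cubeMeasure m d x).real A

lemma measurable_cubeDisc (x : Fin d → Fin m) {A : Set (Fin d → ℝ)} (hA : MeasurableSet A) :
    Measurable (cubeDisc x A) :=
  (measurable_one.indicator hA).sub_const _

lemma measurable_cubeDisc_eval (x : Fin d → Fin m) {A : Set (Fin d → ℝ)} (hA : MeasurableSet A) :
    Measurable fun P : (Fin d → Fin m) → Fin d → ℝ => cubeDisc x A (P x) :=
  (measurable_cubeDisc x hA).comp (measurable_pi_apply x)

variable [NeZero m]

lemma abs_cubeDisc_le_one (x : Fin d → Fin m) (A : Set (Fin d → ℝ)) (p : Fin d → ℝ) :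
    |cubeDisc x A p| ≤ 1 := by
  classical
  have hle : (cubeMeasure m d x).real A ≤ 1 := measureReal_le_one
  have hnonneg : 0 ≤ (cubeMeasure m d x).real A := measureReal_nonneg
  rw [cubeDisc, Set.indicator_apply, Pi.one_apply, abs_le]
  split_ifs <;> constructor <;> linarith

lemma integral_cubeDisc (x : Fin d → Fin m) {A : Set (Fin d → ℝ)} (hA : MeasurableSet A) :
    ∫ p, cubeDisc x A p ∂cubeMeasure m d x = 0 := by
  simp only [cubeDisc]
  rw [integral_sub ((integrable_const 1).indicator hA) (integrable_const _), integral_const,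
    integral_indicator_one hA, probReal_univ, one_smul, sub_self]

lemma jdisc_eq_sum_cubeDisc (P : (Fin d → Fin m) → Fin d → ℝ) {A : Set (Fin d → ℝ)}
    (hA : MeasurableSet A) (hA1 : A ⊆ Set.univ.pi fun _ => Set.Ico (0 : ℝ) 1) :
    jdisc m d P A = ∑ x, cubeDisc x A (P x) := by
  classical
  simp only [cubeDisc, Finset.sum_sub_distrib, sum_cubeMeasure_real hA hA1,
    Set.indicator_apply, Pi.one_apply, Finset.sum_boole]
  rw [jdisc, measureReal_def]

end CubeDiscrepancy

section StarDiscrepancy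

variable {m d : ℕ}

lemma measurableSet_anchoredBox (y : Fin d → ℝ) : MeasurableSet (anchoredBox d y) :=
  .univ_pi fun _ => measurableSet_Ico

lemma anchoredBox_subset {y : Fin d → ℝ} (hy : ∀ i, y i ≤ 1) :
    anchoredBox d y ⊆ Set.univ.pi fun _ => Set.Ico (0 : ℝ) 1 :=
  Set.pi_mono fun i _ => Set.Ico_subset_Ico_right (hy i)

lemma anchoredBox_sup_zero (y : Fin d → ℝ) : anchoredBox d (y ⊔ 0) = anchoredBox d y := by
  ext p
  simp only [anchoredBox, Set.mem_univ_pi, Set.mem_Ico, Pi.sup_apply, Pi.zero_apply, lt_sup_iff]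
  exact forall_congr' fun i => by grind

lemma measureReal_anchoredBox (y : Fin d → ℝ) :
    volume.real (anchoredBox d y) = ∏ i, max (y i) 0 := by
  rw [anchoredBox, measureReal_def, volume_pi_pi, ENNReal.toReal_prod]
  simp only [← measureReal_def, Real.volume_real_Ico, sub_zero]

lemma eventually_mem_anchoredBox_iff (y p : Fin d → ℝ) :
    ∀ᶠ z in nhdsWithin y (Set.univ.pi fun i => Set.Iio (y i)),
      (p ∈ anchoredBox d z ↔ p ∈ anchoredBox d y) := by
  have hlt : ∀ᶠ z in nhdsWithin y (Set.univ.pi fun i => Set.Iio (y i)), ∀ i, z i < y i :=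
    eventually_mem_nhdsWithin.mono fun z hz i => hz i trivial
  have hgt : ∀ᶠ z in nhdsWithin y (Set.univ.pi fun i => Set.Iio (y i)),
      ∀ i, p i < y i → p i < z i :=
    nhdsWithin_le_nhds <| Filter.eventually_all.2 fun i => Filter.eventually_imp_distrib_left.2
      fun hi => (continuous_apply i).tendsto y |>.eventually_const_lt hi
  filter_upwards [hlt, hgt] with z hzy hpz
  simp only [anchoredBox, Set.mem_univ_pi, Set.mem_Ico]
  exact forall_congr' fun i => and_congr_right fun _ => ⟨fun h => h.trans (hzy i), hpz i⟩

lemma tendsto_jdisc_anchoredBox (P : (Fin d → Fin m) → Fin d → ℝ) (y : Fin d → ℝ) :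
    Filter.Tendsto (fun z => jdisc m d P (anchoredBox d z))
      (nhdsWithin y (Set.univ.pi fun i => Set.Iio (y i)))
      (nhds (jdisc m d P (anchoredBox d y))) := by
  classical
  have hcount : ∀ᶠ z in nhdsWithin y (Set.univ.pi fun i => Set.Iio (y i)),
      ∀ x, (P x ∈ anchoredBox d z ↔ P x ∈ anchoredBox d y) :=
    Filter.eventually_all.2 fun x => eventually_mem_anchoredBox_iff y (P x)
  have hvolume : Continuous fun z : Fin d → ℝ => (volume (anchoredBox d z)).toReal := by
    simp only [← measureReal_def, measureReal_anchoredBox]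
    fun_prop
  refine Filter.Tendsto.sub ?_ ((hvolume.tendsto y).mono_left nhdsWithin_le_nhds |>.const_mul _)
  refine tendsto_const_nhds.congr' (hcount.mono fun z hz => ?_)
  exact congrArg (fun s : Finset _ => (s.card : ℝ)) (Finset.filter_congr fun x _ => (hz x).symm)

lemma frequently_ratCast_nhdsWithin_pi_Iio {ι : Type*} [Finite ι] (y : ι → ℝ) :
    ∃ᶠ z in nhdsWithin y (Set.univ.pi fun i => Set.Iio (y i)),
      z ∈ Set.range fun (q : ι → ℚ) i => (q i : ℝ) := by
  have hdense : DenseRange fun (q : ι → ℚ) i => (q i : ℝ) :=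
    DenseRange.piMap fun _ => Rat.denseRange_cast
  have hopen : IsOpen (Set.univ.pi fun i => Set.Iio (y i)) :=
    isOpen_set_pi Set.finite_univ fun i _ => isOpen_Iio
  have hclosure : y ∈ closure (Set.univ.pi fun i => Set.Iio (y i)) := by
    simp only [closure_pi_set, closure_Iio, Set.mem_univ_pi, Set.mem_Iic, le_refl, implies_true]
  have hinter : y ∈ closure ((Set.univ.pi fun i => Set.Iio (y i)) ∩
      Set.range fun (q : ι → ℚ) i => (q i : ℝ)) :=
    closure_minimal (hdense.open_subset_closure_inter hopen) isClosed_closure hclosure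
  rw [Set.inter_comm] at hinter
  exact frequently_nhdsWithin_iff.2 (mem_closure_iff_frequently.1 hinter)

lemma starDisc_nonneg (P : (Fin d → Fin m) → Fin d → ℝ) : 0 ≤ starDisc m d P :=
  Real.iSup_nonneg fun _ => abs_nonneg _

variable [NeZero m]

lemma abs_jdisc_anchoredBox_le (P : (Fin d → Fin m) → Fin d → ℝ) {y : Fin d → ℝ}
    (hy : ∀ i, y i ≤ 1) : |jdisc m d P (anchoredBox d y)| ≤ (m : ℝ) ^ d := by
  rw [jdisc_eq_sum_cubeDisc P (measurableSet_anchoredBox y) (anchoredBox_subset hy)]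
  calc |∑ x, cubeDisc x (anchoredBox d y) (P x)|
      ≤ ∑ _x : Fin d → Fin m, (1 : ℝ) :=
        (Finset.abs_sum_le_sum_abs _ _).trans
          (Finset.sum_le_sum fun x _ => abs_cubeDisc_le_one x _ _)
    _ = (m : ℝ) ^ d := by simp

lemma abs_jdisc_le_starDisc (P : (Fin d → Fin m) → Fin d → ℝ) {y : Fin d → ℝ}
    (hy : ∀ i, y i < 1) : |jdisc m d P (anchoredBox d y)| ≤ starDisc m d P := by
  have hbdd : BddAbove (Set.range fun y : {y : Fin d → ℝ // ∀ i, y i ∈ Set.Ico (0 : ℝ) 1} =>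
      |jdisc m d P (anchoredBox d y.1)|) :=
    ⟨(m : ℝ) ^ d, Set.forall_mem_range.2 fun y =>
      abs_jdisc_anchoredBox_le P fun i => (y.2 i).2.le⟩
  rw [← anchoredBox_sup_zero y]
  exact le_ciSup hbdd ⟨y ⊔ 0, fun i => ⟨le_sup_right, sup_lt_iff.2 ⟨hy i, one_pos⟩⟩⟩

lemma starDisc_eq_iSup_rat (P : (Fin d → Fin m) → Fin d → ℝ) :
    starDisc m d P = ⨆ q : {q : Fin d → ℚ // ∀ i, (q i : ℝ) < 1},
      |jdisc m d P (anchoredBox d fun i => q.1 i)| := by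
  have : Nonempty {y : Fin d → ℝ // ∀ i, y i ∈ Set.Ico (0 : ℝ) 1} := ⟨0, by simp⟩
  have : Nonempty {q : Fin d → ℚ // ∀ i, (q i : ℝ) < 1} := ⟨0, by simp⟩
  refine le_antisymm (ciSup_le fun ⟨y, hy⟩ => ?_) (ciSup_le fun q => abs_jdisc_le_starDisc P q.2)
  have hbdd : BddAbove (Set.range fun q : {q : Fin d → ℚ // ∀ i, (q i : ℝ) < 1} =>
      |jdisc m d P (anchoredBox d fun i => q.1 i)|) :=
    ⟨starDisc m d P, Set.forall_mem_range.2 fun q => abs_jdisc_le_starDisc P q.2⟩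
  refine le_of_tendsto_of_frequently (tendsto_jdisc_anchoredBox P y).abs ?_
  refine ((frequently_ratCast_nhdsWithin_pi_Iio y).and_eventually
    eventually_mem_nhdsWithin).mono ?_
  rintro _ ⟨⟨q, rfl⟩, hq⟩
  exact le_ciSup hbdd ⟨q, fun i => (hq i trivial).trans (hy i).2⟩

lemma measurable_jdisc {A : Set (Fin d → ℝ)}
    (hA : MeasurableSet A) (hA1 : A ⊆ Set.univ.pi fun _ => Set.Ico (0 : ℝ) 1) :
    Measurable fun P => jdisc m d P A := by
  simp only [jdisc_eq_sum_cubeDisc _ hA hA1]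
  exact Finset.measurable_fun_sum _ fun x _ => measurable_cubeDisc_eval x hA

lemma measurable_starDisc : Measurable (starDisc m d) := by
  rw [funext starDisc_eq_iSup_rat]
  exact .iSup fun q => (measurable_jdisc (measurableSet_anchoredBox _)
    (anchoredBox_subset fun i => (q.2 i).le)).abs

lemma integrable_starDisc : Integrable (starDisc m d) (jitterMeasure m d) := by
  refine .of_bound measurable_starDisc.aestronglyMeasurable ((m : ℝ) ^ d) (.of_forall fun P => ?_)
  rw [Real.norm_of_nonneg (starDisc_nonneg P)]
  exact Real.iSup_le (fun y => abs_jdisc_anchoredBox_le P fun i => (y.2 i).2.le) (by positivity)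

end StarDiscrepancy

section LastLayers

variable {m d : ℕ}

open scoped Classical in
/-- The upper corner of an anchored box that contains the lower half of the last grid layer in the
directions `i ∈ S`, and none of the last grid layer in the other directions. -/
def layerCorner (m : ℕ) {d : ℕ} (S : Set (Fin d)) (i : Fin d) : ℝ :=
  if i ∈ S then 1 - 1 / (2 * m) else 1 - 1 / m

/-- The grid cubes that lie in the last layer in direction `i` and in no other direction. -/
def lastLayer (m : ℕ) {d : ℕ} (i : Fin d) : Finset (Fin d → Fin m) :=
  {x | ∀ j, (x j : ℕ) + 1 = m ↔ j = i}

lemma mem_lastLayer {x : Fin d → Fin m} {i : Fin d} :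
    x ∈ lastLayer m i ↔ ∀ j, (x j : ℕ) + 1 = m ↔ j = i := by
  simp only [lastLayer, Finset.mem_filter, Finset.mem_univ, true_and]

lemma pairwiseDisjoint_lastLayer :
    Pairwise (Function.onFun Disjoint (lastLayer m (d := d))) := by
  intro i j hij
  refine Finset.disjoint_left.2 fun x hi hj => hij ?_
  exact (mem_lastLayer.1 hj i).1 ((mem_lastLayer.1 hi i).2 rfl)

variable [NeZero m]

lemma card_lastLayer (i : Fin d) : (lastLayer m i).card = (m - 1) ^ (d - 1) := by
  have hlast (a : Fin m) : (a : ℕ) + 1 = m ↔ a = Fin.ofNat m (m - 1) := by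
    have := NeZero.pos m
    rw [Fin.ext_iff, Fin.val_ofNat, Nat.mod_eq_of_lt (by omega)]
    omega
  have hpi : lastLayer m i = Fintype.piFinset fun j =>
      if j = i then {Fin.ofNat m (m - 1)} else {Fin.ofNat m (m - 1)}ᶜ := by
    ext x
    rw [mem_lastLayer, Fintype.mem_piFinset]
    refine forall_congr' fun j => ?_
    split_ifs with hj <;> simp [hlast, hj]
  rw [hpi, Fintype.card_piFinset, ← Finset.mul_prod_erase _ _ (Finset.mem_univ i), if_pos rfl,
    Finset.card_singleton, one_mul,
    Finset.prod_congr rfl fun j hj => by rw [if_neg (Finset.ne_of_mem_erase hj)],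
    Finset.prod_const, Finset.card_compl, Finset.card_singleton, Fintype.card_fin,
    Finset.card_erase_of_mem (Finset.mem_univ i), Finset.card_univ, Fintype.card_fin]

lemma one_sub_inv_le_layerCorner (S : Set (Fin d)) (i : Fin d) :
    1 - 1 / (m : ℝ) ≤ layerCorner m S i := by
  have hm : (0 : ℝ) < m := mod_cast NeZero.pos m
  have hhalf : (1 : ℝ) / (2 * m) ≤ 1 / m := one_div_le_one_div_of_le hm (by linarith)
  unfold layerCorner
  split_ifs <;> linarith

lemma layerCorner_lt_one (S : Set (Fin d)) (i : Fin d) : layerCorner m S i < 1 := by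
  have hm : (0 : ℝ) < m := mod_cast NeZero.pos m
  unfold layerCorner
  split_ifs <;> exact sub_lt_self 1 (by positivity)

lemma mem_anchoredBox_layerCorner_iff {x : Fin d → Fin m} {i : Fin d} (hx : x ∈ lastLayer m i)
    {p : Fin d → ℝ} (hp : p ∈ jitterCube m d x) (S : Set (Fin d)) :
    p ∈ anchoredBox d (layerCorner m S) ↔ i ∈ S ∧ p i < 1 - 1 / (2 * m) := by
  have hm : (0 : ℝ) < m := mod_cast NeZero.pos m
  have hcell (j : Fin d) : (x j : ℝ) / m ≤ p j ∧ p j < (x j : ℝ) / m + 1 / m :=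
    hp j trivial
  have hbelow (j : Fin d) (hj : j ≠ i) : p j < layerCorner m S j := by
    have hxj : (x j : ℕ) + 1 ≠ m := mt (mem_lastLayer.1 hx j).1 hj
    have hle : ((x j : ℕ) : ℝ) + 1 ≤ m - 1 := by
      rw [le_sub_iff_add_le]; exact_mod_cast (show (x j : ℕ) + 1 + 1 ≤ m by omega)
    calc p j < ((x j : ℝ) + 1) / m := by rw [add_div]; exact (hcell j).2
      _ ≤ (m - 1) / m := by gcongr
      _ = 1 - 1 / m := by rw [sub_div, div_self hm.ne']
      _ ≤ layerCorner m S j := one_sub_inv_le_layerCorner S j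
  have hlast : 1 - 1 / (m : ℝ) ≤ p i := by
    have hxi : ((x i : ℕ) : ℝ) + 1 = m := mod_cast (mem_lastLayer.1 hx i).2 rfl
    calc 1 - 1 / (m : ℝ) = (x i : ℝ) / m := by rw [← hxi]; field_simp; ring
      _ ≤ p i := (hcell i).1
  have hbox : p ∈ anchoredBox d (layerCorner m S) ↔ p i < layerCorner m S i := by
    simp only [anchoredBox, Set.mem_univ_pi, Set.mem_Ico]
    have hnonneg (j : Fin d) : 0 ≤ p j := (by positivity : (0 : ℝ) ≤ x j / m).trans (hcell j).1
    refine ⟨fun h => (h i).2, fun hi j => ⟨hnonneg j, ?_⟩⟩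
    rcases eq_or_ne j i with rfl | hj
    exacts [hi, hbelow j hj]
  rw [hbox]
  by_cases hi : i ∈ S
  · rw [layerCorner, if_pos hi, and_iff_right hi]
  · simp only [layerCorner, hi, if_false, hlast.not_gt, false_and]

lemma cubeMeasure_real_anchoredBox_layerCorner {x : Fin d → Fin m} {i : Fin d}
    (hx : x ∈ lastLayer m i) {S : Set (Fin d)} (hi : i ∈ S) :
    (cubeMeasure m d x).real (anchoredBox d (layerCorner m S)) = 1 / 2 := by
  have hm : (0 : ℝ) < m := mod_cast NeZero.pos m
  have hxi : ((x i : ℕ) : ℝ) + 1 = m := mod_cast (mem_lastLayer.1 hx i).2 rfl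
  have hmid : 1 - 1 / (2 * (m : ℝ)) = (x i : ℝ) / m + 1 / (2 * m) := by
    rw [eq_sub_of_add_eq hxi]; field_simp; ring
  have hbox : anchoredBox d (layerCorner m S) =ᵐ[cubeMeasure m d x]
      {p : Fin d → ℝ | p i ∈ Set.Iio ((x i : ℝ) / m + 1 / (2 * m))} :=
    (ae_mem_jitterCube x).mono fun p hp => propext <| by
      rw [← hmid]
      exact (mem_anchoredBox_layerCorner_iff hx hp S).trans (and_iff_right hi)
  rw [measureReal_congr hbox, cubeMeasure_real_eval_preimage x i measurableSet_Iio,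
    cellMeasure_real_Iio_midpoint]

lemma cubeDisc_layerCorner_of_mem {x : Fin d → Fin m} {i : Fin d} (hx : x ∈ lastLayer m i)
    {p : Fin d → ℝ} (hp : p ∈ jitterCube m d x) {S : Set (Fin d)} (hi : i ∈ S) :
    cubeDisc x (anchoredBox d (layerCorner m S)) p =
      cubeDisc x (anchoredBox d (layerCorner m {i})) p := by
  classical
  simp only [cubeDisc, cubeMeasure_real_anchoredBox_layerCorner hx hi,
    cubeMeasure_real_anchoredBox_layerCorner hx (Set.mem_singleton i), Set.indicator_apply,
    mem_anchoredBox_layerCorner_iff hx hp, hi, Set.mem_singleton]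

lemma cubeDisc_layerCorner_of_notMem {x : Fin d → Fin m} {i : Fin d} (hx : x ∈ lastLayer m i)
    {p : Fin d → ℝ} (hp : p ∈ jitterCube m d x) {S : Set (Fin d)} (hi : i ∉ S) :
    cubeDisc x (anchoredBox d (layerCorner m S)) p = 0 := by
  have hdisj {q : Fin d → ℝ} (hq : q ∈ jitterCube m d x) :
      q ∉ anchoredBox d (layerCorner m S) := fun hqS =>
    hi ((mem_anchoredBox_layerCorner_iff hx hq S).1 hqS).1
  have hnull : (cubeMeasure m d x).real (anchoredBox d (layerCorner m S)) = 0 := by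
    rw [measureReal_eq_zero_iff, measure_eq_zero_iff_ae_notMem]
    exact (ae_mem_jitterCube x).mono fun q hq => hdisj hq
  rw [cubeDisc, hnull, Set.indicator_of_notMem (hdisj hp), sub_zero]

lemma sq_cubeDisc_layerCorner {x : Fin d → Fin m} {i : Fin d} (hx : x ∈ lastLayer m i)
    (p : Fin d → ℝ) : cubeDisc x (anchoredBox d (layerCorner m {i})) p ^ 2 = 1 / 4 := by
  classical
  rw [cubeDisc, cubeMeasure_real_anchoredBox_layerCorner hx (Set.mem_singleton i),
    Set.indicator_apply, Pi.one_apply]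
  split_ifs <;> norm_num

end LastLayers

section AdaptiveBox

variable {m d : ℕ}

/-- The contribution of the last layer in direction `i` to the signed discrepancy of an anchored box
that contains the lower half of this layer. -/
def layerDisc (i : Fin d) (P : (Fin d → Fin m) → Fin d → ℝ) : ℝ :=
  ∑ x ∈ lastLayer m i, cubeDisc x (anchoredBox d (layerCorner m {i})) (P x)

/-- The directions in which it pays to extend the anchored box into the last layer. -/
def positiveLayers (P : (Fin d → Fin m) → Fin d → ℝ) : Set (Fin d) :=
  {i | 0 < layerDisc i P}

/-- The contribution of the point of the cube `jitterCube m d x` to the signed discrepancy of the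
anchored box extended in the directions `positiveLayers P`. -/
def adaptiveDisc (x : Fin d → Fin m) (P : (Fin d → Fin m) → Fin d → ℝ) : ℝ :=
  cubeDisc x (anchoredBox d (layerCorner m (positiveLayers P))) (P x)

lemma layerDisc_eq_sum (i : Fin d) :
    layerDisc i = ∑ x ∈ lastLayer m i, fun P =>
      cubeDisc x (anchoredBox d (layerCorner m {i})) (P x) := by
  ext P
  rw [layerDisc, Finset.sum_apply]

lemma measurable_layerDisc (i : Fin d) : Measurable (layerDisc (m := m) i) :=
  Finset.measurable_fun_sum _ fun x _ => measurable_cubeDisc_eval x (measurableSet_anchoredBox _)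

lemma measurable_positiveLayers : Measurable (positiveLayers (m := m) (d := d)) :=
  measurable_set_iff.2 fun i =>
    measurableSet_setOfPred.1 (measurableSet_lt measurable_const (measurable_layerDisc i))

lemma measurable_cubeDisc_layerCorner (x : Fin d → Fin m) :
    Measurable fun Sp : Set (Fin d) × (Fin d → ℝ) =>
      cubeDisc x (anchoredBox d (layerCorner m Sp.1)) Sp.2 :=
  measurable_from_prod_countable_right fun S =>
    measurable_cubeDisc x (A := anchoredBox d (layerCorner m S)) (measurableSet_anchoredBox _)

lemma measurable_adaptiveDisc (x : Fin d → Fin m) : Measurable (adaptiveDisc x) := by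
  have hcomp := (measurable_cubeDisc_layerCorner x).comp
    (measurable_positiveLayers.prodMk (measurable_pi_apply x))
  exact hcomp

lemma dependsOn_positiveLayers {x : Fin d → Fin m} (hx : ∀ i, x ∉ lastLayer m i) :
    DependsOn (positiveLayers (m := m) (d := d)) (({x}ᶜ : Finset (Fin d → Fin m)) : Set _) := by
  intro P Q hPQ
  have hlayer (i : Fin d) : layerDisc i P = layerDisc i Q :=
    Finset.sum_congr rfl fun y hy => by
      rw [hPQ y (by simpa using ne_of_mem_of_not_mem hy (hx i))]
  simp only [positiveLayers, hlayer]

variable [NeZero m]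

lemma integral_cubeDisc_eval (x : Fin d → Fin m) {A : Set (Fin d → ℝ)} (hA : MeasurableSet A) :
    ∫ P, cubeDisc x A (P x) ∂jitterMeasure m d = 0 := by
  rw [jitterMeasure_eq_pi, integral_comp_eval (measurable_cubeDisc x hA).aestronglyMeasurable,
    integral_cubeDisc x hA]

lemma iIndepFun_cubeDisc {A : Set (Fin d → ℝ)} (hA : MeasurableSet A) :
    iIndepFun (fun x P => cubeDisc x A (P x)) (jitterMeasure m d) := by
  rw [jitterMeasure_eq_pi]
  exact iIndepFun_pi fun x => (measurable_cubeDisc x hA).aemeasurable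

lemma isPlatykurtic_layerDisc (i : Fin d) :
    IsPlatykurtic (layerDisc i) (jitterMeasure m d) := by
  have hA := measurableSet_anchoredBox (layerCorner m {i})
  rw [layerDisc_eq_sum]
  exact isPlatykurtic_finsetSum (fun x => measurable_cubeDisc_eval x hA) (iIndepFun_cubeDisc hA)
    fun x hx => isPlatykurtic_of_sq_ae_eq_const (measurable_cubeDisc_eval x hA).aemeasurable
      (integral_cubeDisc_eval x hA) (.of_forall fun P => sq_cubeDisc_layerCorner hx (P x))

lemma variance_layerDisc (i : Fin d) :
    Var[layerDisc i; jitterMeasure m d] = ((m : ℝ) - 1) ^ (d - 1) / 4 := by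
  have hA := measurableSet_anchoredBox (layerCorner m {i})
  have hvar (x : Fin d → Fin m) (hx : x ∈ lastLayer m i) :
      Var[fun P => cubeDisc x (anchoredBox d (layerCorner m {i})) (P x); jitterMeasure m d] =
        1 / 4 :=
    variance_eq_of_sq_ae_eq_const (measurable_cubeDisc_eval x hA).aemeasurable
      (integral_cubeDisc_eval x hA) (.of_forall fun P => sq_cubeDisc_layerCorner hx (P x))
  rw [layerDisc_eq_sum, IndepFun.variance_sum
      (fun x _ => .of_bound (measurable_cubeDisc_eval x hA).aestronglyMeasurable 1
        (.of_forall fun _ => abs_cubeDisc_le_one _ _ _))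
      fun x _ y _ hxy => (iIndepFun_cubeDisc hA).indepFun hxy,
    Finset.sum_congr rfl hvar, Finset.sum_const, card_lastLayer, nsmul_eq_mul, Nat.cast_pow,
    Nat.cast_pred (NeZero.pos m), mul_one_div]

lemma sqrt_div_le_integral_max_layerDisc (i : Fin d) :
    √(((m : ℝ) - 1) ^ (d - 1)) / 18 ≤ ∫ P, max (layerDisc i P) 0 ∂jitterMeasure m d := by
  calc √(((m : ℝ) - 1) ^ (d - 1)) / 18 = √Var[layerDisc i; jitterMeasure m d] / 9 := by
        rw [variance_layerDisc, Real.sqrt_div' _ zero_le_four, show (4 : ℝ) = 2 ^ 2 by norm_num,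
          Real.sqrt_sq zero_le_two]
        ring
    _ ≤ ∫ P, max (layerDisc i P) 0 ∂jitterMeasure m d :=
        (isPlatykurtic_layerDisc i).sqrt_variance_div_le_integral_max_zero

lemma integrable_adaptiveDisc (x : Fin d → Fin m) :
    Integrable (adaptiveDisc x) (jitterMeasure m d) :=
  .of_bound (measurable_adaptiveDisc x).aestronglyMeasurable 1 <|
    .of_forall fun _ => abs_cubeDisc_le_one _ _ _

lemma integral_adaptiveDisc {x : Fin d → Fin m} (hx : ∀ i, x ∉ lastLayer m i) :
    ∫ P, adaptiveDisc x P ∂jitterMeasure m d = 0 := by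
  have hindep : IndepFun positiveLayers (fun P => P x) (jitterMeasure m d) := by
    rw [jitterMeasure_eq_pi]
    exact indepFun_of_dependsOn_of_disjoint (t := {x}) disjoint_compl_left
      measurable_positiveLayers (measurable_pi_apply x) (dependsOn_positiveLayers hx)
      fun P Q hPQ => hPQ x (Finset.mem_coe.2 (Finset.mem_singleton_self x))
  have hf : Integrable (fun Sp : Set (Fin d) × (Fin d → ℝ) =>
      cubeDisc x (anchoredBox d (layerCorner m Sp.1)) Sp.2)
      (((jitterMeasure m d).map positiveLayers).prod ((jitterMeasure m d).map fun P => P x)) :=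
    .of_bound (measurable_cubeDisc_layerCorner x).aestronglyMeasurable 1 <|
      .of_forall fun _ => abs_cubeDisc_le_one _ _ _
  have hfreeze := integral_comp_prodMk_of_indepFun hindep measurable_positiveLayers.aemeasurable
    (measurable_pi_apply x).aemeasurable hf
  rw [(measurePreserving_eval_jitterMeasure x).map_eq] at hfreeze
  simp only [integral_cubeDisc x (measurableSet_anchoredBox _), integral_zero] at hfreeze
  exact hfreeze

lemma sum_lastLayer_adaptiveDisc {P : (Fin d → Fin m) → Fin d → ℝ}
    (hP : ∀ x, P x ∈ jitterCube m d x) (i : Fin d) :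
    ∑ x ∈ lastLayer m i, adaptiveDisc x P = max (layerDisc i P) 0 := by
  by_cases hi : 0 < layerDisc i P
  · rw [max_eq_left hi.le]
    exact Finset.sum_congr rfl fun x hx => cubeDisc_layerCorner_of_mem hx (hP x) hi
  · rw [max_eq_right (not_lt.1 hi)]
    exact Finset.sum_eq_zero fun x hx => cubeDisc_layerCorner_of_notMem hx (hP x) hi

lemma sum_adaptiveDisc_le_starDisc (P : (Fin d → Fin m) → Fin d → ℝ) :
    ∑ x, adaptiveDisc x P ≤ starDisc m d P := by
  have hlt := layerCorner_lt_one (m := m) (positiveLayers P)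
  calc ∑ x, adaptiveDisc x P
      = jdisc m d P (anchoredBox d (layerCorner m (positiveLayers P))) :=
        (jdisc_eq_sum_cubeDisc P (measurableSet_anchoredBox _)
          (anchoredBox_subset fun i => (hlt i).le)).symm
    _ ≤ starDisc m d P := (le_abs_self _).trans (abs_jdisc_le_starDisc P hlt)

lemma integral_sum_adaptiveDisc :
    ∫ P, ∑ x, adaptiveDisc x P ∂jitterMeasure m d =
      ∑ i : Fin d, ∫ P, max (layerDisc i P) 0 ∂jitterMeasure m d := by
  have hrest (x : Fin d → Fin m) (hx : x ∉ Finset.univ.biUnion (lastLayer m)) :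
      ∫ P, adaptiveDisc x P ∂jitterMeasure m d = 0 :=
    integral_adaptiveDisc fun i hi => hx (Finset.mem_biUnion.2 ⟨i, Finset.mem_univ i, hi⟩)
  have hlayer (i : Fin d) : ∑ x ∈ lastLayer m i, ∫ P, adaptiveDisc x P ∂jitterMeasure m d =
      ∫ P, max (layerDisc i P) 0 ∂jitterMeasure m d := by
    rw [← integral_finsetSum _ fun x _ => integrable_adaptiveDisc x]
    exact integral_congr_ae
      (ae_forall_mem_jitterCube.mono fun P hP => sum_lastLayer_adaptiveDisc hP i)
  rw [integral_finsetSum _ fun x _ => integrable_adaptiveDisc x,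
    ← Finset.sum_subset (Finset.subset_univ _) fun x _ hx => hrest x hx,
    Finset.sum_biUnion fun i _ j _ hij => pairwiseDisjoint_lastLayer hij]
  exact Finset.sum_congr rfl fun i _ => hlayer i

theorem mul_sqrt_div_le_expStarDisc (m d : ℕ) [NeZero m] :
    d * √(((m : ℝ) - 1) ^ (d - 1)) / 18 ≤ expStarDisc m d := by
  calc d * √(((m : ℝ) - 1) ^ (d - 1)) / 18
      = ∑ _i : Fin d, √(((m : ℝ) - 1) ^ (d - 1)) / 18 := by
        rw [Finset.sum_const, Finset.card_univ, Fintype.card_fin, nsmul_eq_mul, mul_div_assoc]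
    _ ≤ ∑ i : Fin d, ∫ P, max (layerDisc i P) 0 ∂jitterMeasure m d :=
        Finset.sum_le_sum fun i _ => sqrt_div_le_integral_max_layerDisc i
    _ = ∫ P, ∑ x, adaptiveDisc x P ∂jitterMeasure m d := integral_sum_adaptiveDisc.symm
    _ ≤ expStarDisc m d :=
        integral_mono (integrable_finsetSum _ fun x _ => integrable_adaptiveDisc x)
          integrable_starDisc sum_adaptiveDisc_le_starDisc

end AdaptiveBox

lemma exp_neg_two_mul_le_one_sub {t : ℝ} (ht0 : 0 ≤ t) (ht1 : t ≤ 1 / 2) :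
    exp (-(2 * t)) ≤ 1 - t := by
  rw [exp_neg, inv_le_comm₀ (exp_pos _) (by linarith)]
  calc (1 - t)⁻¹ ≤ 2 * t + 1 := by
        rw [inv_le_iff_one_le_mul₀ (by linarith)]; nlinarith
    _ ≤ exp (2 * t) := add_one_le_exp _

lemma exp_neg_div_mul_sqrt_pow_le {t : ℝ} (ht : 2 ≤ t) (k : ℕ) :
    exp (-(k / t)) * √(t ^ k) ≤ √((t - 1) ^ k) := by
  have : 0 < t := by linarith
  have hbase : exp (-(2 * (1 / t))) * t ≤ t - 1 := by
    calc exp (-(2 * (1 / t))) * t ≤ (1 - 1 / t) * t := by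
          gcongr
          exact exp_neg_two_mul_le_one_sub (by positivity) (one_div_le_one_div_of_le two_pos ht)
      _ = t - 1 := by field_simp
  have hsq : exp (-(k / t)) ^ 2 = exp (-(2 * (1 / t))) ^ k := by
    rw [← exp_nat_mul, ← exp_nat_mul]
    congr 1
    push_cast
    ring
  refine Real.le_sqrt_of_sq_le ?_
  calc (exp (-(k / t)) * √(t ^ k)) ^ 2 = (exp (-(2 * (1 / t))) * t) ^ k := by
        rw [mul_pow, hsq, Real.sq_sqrt (by positivity), ← mul_pow]
    _ ≤ (t - 1) ^ k := by gcongr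

lemma rpow_sub_one_div_two {t : ℝ} (ht : 0 ≤ t) {d : ℕ} (hd : 1 ≤ d) :
    t ^ (((d : ℝ) - 1) / 2) = √(t ^ (d - 1)) := by
  rw [Real.sqrt_eq_rpow, ← Real.rpow_natCast, ← Real.rpow_mul ht, Nat.cast_pred hd, mul_one_div]

/-- For every constant `γ > 0` there is a constant `C > 0` (depending only on `γ`) such that for
all integers `m, d ≥ 2` with `m ≥ γ·d`, a jittered sampling point set of `N = m^d` points
in `[0,1)^d` satisfies `E[D*(P)] ≥ C·d·m^((d−1)/2)`. -/
theorem jittered_sampling_lower_bound_linear_ratio (γ : ℝ) (hγ : 0 < γ) :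
    ∃ C : ℝ, 0 < C ∧
      ∀ m d : ℕ, 2 ≤ m → 2 ≤ d → γ * d ≤ m →
        C * d * (m : ℝ) ^ (((d : ℝ) - 1) / 2) ≤ expStarDisc m d := by
  refine ⟨exp (-(1 / γ)) / 18, by positivity, fun m d hm hd hγm => ?_⟩
  have : NeZero m := ⟨by omega⟩
  have hm2 : (2 : ℝ) ≤ m := mod_cast hm
  have hratio : ((d - 1 : ℕ) : ℝ) / m ≤ 1 / γ := by
    rw [div_le_div_iff₀ (by linarith) hγ, one_mul, mul_comm]
    exact (mul_le_mul_of_nonneg_left (mod_cast Nat.sub_le d 1) hγ.le).trans hγm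
  rw [rpow_sub_one_div_two (by positivity) (by omega)]
  calc exp (-(1 / γ)) / 18 * d * √((m : ℝ) ^ (d - 1))
      = d * (exp (-(1 / γ)) * √((m : ℝ) ^ (d - 1))) / 18 := by ring
    _ ≤ d * (exp (-((d - 1 : ℕ) / m)) * √((m : ℝ) ^ (d - 1))) / 18 := by gcongr
    _ ≤ d * √(((m : ℝ) - 1) ^ (d - 1)) / 18 := by
        gcongr
        exact exp_neg_div_mul_sqrt_pow_le hm2 (d - 1)
    _ ≤ expStarDisc m d := mul_sqrt_div_le_expStarDisc m d
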